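/- Let T, E₁, E₂ : ℝ × ℝ → ℝ³ and k₁, k₂ : ℝ × ℝ → ℝ be smooth with (T, E₁, E₂) pairwise ⟨·,·⟩_L-orthogonal, ⟨T,T⟩_L = ⟨E₁,E₁⟩_L = 1, ⟨E₂,E₂⟩_L = −1, satisfying Tₛ = k₁E₁ + k₂E₂, (E₁)ₛ = −k₁T, (E₂)ₛ = k₂T and T_t = (k₂)ₛE₁ + (k₁)ₛE₂, (E₁)_t = −(k₂)ₛT − ½(k₁² − k₂²)E₂, (E₂)_t = (k₁)ₛT − ½(k₁² − k₂²)E₁. Then the principal curvatures evolve according to (k₁)_t = (k₂)ₛₛ + ½(k₁² − k₂²)k₂ and (k₂)_t = (k₁)ₛₛ + ½(k₁² − k₂²)k₁. -/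

import Mathlib

noncomputable section

open Real

/-- Minkowski 3-space: ℝ³ as a vector type. -/
abbrev V3 : Type := Fin 3 → ℝ

/-- Lorentzian inner product ⟨x,y⟩_L = −x₁y₁ + x₂y₂ + x₃y₃ on ℝ³. -/
def lor (x y : V3) : ℝ := -(x 0 * y 0) + x 1 * y 1 + x 2 * y 2

/-- Lorentzian cross product x ×_L y = (x₃y₂ − x₂y₃, x₃y₁ − x₁y₃, x₁y₂ − x₂y₁). -/
def lcross (x y : V3) : V3 :=
  ![x 2 * y 1 - x 1 * y 2, x 2 * y 0 - x 0 * y 2, x 0 * y 1 - x 1 * y 0]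

/-- Partial derivative with respect to the first variable `s`. -/
def pds {E : Type*} [NormedAddCommGroup E] [NormedSpace ℝ E]
    (f : ℝ × ℝ → E) (p : ℝ × ℝ) : E := deriv (fun s => f (s, p.2)) p.1

/-- Partial derivative with respect to the second variable `t`. -/
def pdt {E : Type*} [NormedAddCommGroup E] [NormedSpace ℝ E]
    (f : ℝ × ℝ → E) (p : ℝ × ℝ) : E := deriv (fun t => f (p.1, t)) p.2

/-!
The mixed partial derivatives of `T` agree. Expanding `(Tₛ)ₜ = (Tₜ)ₛ` with the frame equations, the
`T`-components cancel, and comparing the coefficients of the linearly independent vectors `E₁` and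
`E₂` gives the two evolution equations.
-/

section SecondDerivative

variable {G F : Type*} [NormedAddCommGroup G] [NormedSpace ℝ G]
  [NormedAddCommGroup F] [NormedSpace ℝ F] {f : G → F}

lemma differentiable_fderiv_of_contDiff_two (hf : ContDiff ℝ 2 f) :
    Differentiable ℝ (fderiv ℝ f) :=
  (hf.fderiv_right one_add_one_eq_two.le).differentiable one_ne_zero

lemma differentiable_fderiv_apply (hf : ContDiff ℝ 2 f) (v : G) :
    Differentiable ℝ fun x => fderiv ℝ f x v :=
  (differentiable_fderiv_of_contDiff_two hf).clm_apply (differentiable_const v)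

lemma fderiv_fderiv_apply (hf : ContDiff ℝ 2 f) (x v w : G) :
    fderiv ℝ (fun y => fderiv ℝ f y v) x w = fderiv ℝ (fderiv ℝ f) x w v := by
  simp [fderiv_clm_apply (differentiable_fderiv_of_contDiff_two hf x) (differentiableAt_const v)]

end SecondDerivative

section PartialDerivatives

variable {F : Type*} [NormedAddCommGroup F] [NormedSpace ℝ F]
  {f X Y : ℝ × ℝ → F} {a b : ℝ × ℝ → ℝ} {p : ℝ × ℝ}

lemma hasDerivAt_fderiv_fst (hf : DifferentiableAt ℝ f p) :
    HasDerivAt (fun s => f (s, p.2)) (fderiv ℝ f p (1, 0)) p.1 :=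
  hf.hasFDerivAt.comp_hasDerivAt p.1 ((hasDerivAt_id p.1).prodMk (hasDerivAt_const p.1 p.2))

lemma hasDerivAt_fderiv_snd (hf : DifferentiableAt ℝ f p) :
    HasDerivAt (fun t => f (p.1, t)) (fderiv ℝ f p (0, 1)) p.2 :=
  hf.hasFDerivAt.comp_hasDerivAt p.2 ((hasDerivAt_const p.2 p.1).prodMk (hasDerivAt_id p.2))

lemma hasDerivAt_pds (hf : DifferentiableAt ℝ f p) :
    HasDerivAt (fun s => f (s, p.2)) (pds f p) p.1 :=
  (hasDerivAt_fderiv_fst hf).differentiableAt.hasDerivAt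

lemma hasDerivAt_pdt (hf : DifferentiableAt ℝ f p) :
    HasDerivAt (fun t => f (p.1, t)) (pdt f p) p.2 :=
  (hasDerivAt_fderiv_snd hf).differentiableAt.hasDerivAt

lemma pds_eq_fderiv (hf : Differentiable ℝ f) : pds f = fun p => fderiv ℝ f p (1, 0) :=
  funext fun p => (hasDerivAt_fderiv_fst (hf p)).deriv

lemma pdt_eq_fderiv (hf : Differentiable ℝ f) : pdt f = fun p => fderiv ℝ f p (0, 1) :=
  funext fun p => (hasDerivAt_fderiv_snd (hf p)).deriv

lemma differentiable_pds (hf : ContDiff ℝ 2 f) : Differentiable ℝ (pds f) := by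
  rw [pds_eq_fderiv (hf.differentiable two_ne_zero)]
  exact differentiable_fderiv_apply hf (1, 0)

lemma pdt_pds_comm (hf : ContDiff ℝ 2 f) (p : ℝ × ℝ) : pdt (pds f) p = pds (pdt f) p := by
  have hdiff : Differentiable ℝ f := hf.differentiable two_ne_zero
  have hsymm : IsSymmSndFDerivAt ℝ f p := hf.contDiffAt.isSymmSndFDerivAt (by simp)
  calc
    pdt (pds f) p = fderiv ℝ (fderiv ℝ f) p (0, 1) (1, 0) := by
      rw [pds_eq_fderiv hdiff, pdt_eq_fderiv (differentiable_fderiv_apply hf _)]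
      exact fderiv_fderiv_apply hf p (1, 0) (0, 1)
    _ = fderiv ℝ (fderiv ℝ f) p (1, 0) (0, 1) := hsymm (0, 1) (1, 0)
    _ = pds (pdt f) p := by
      rw [pdt_eq_fderiv hdiff, pds_eq_fderiv (differentiable_fderiv_apply hf _)]
      exact (fderiv_fderiv_apply hf p (0, 1) (1, 0)).symm

lemma pds_smul_add_smul (ha : DifferentiableAt ℝ a p) (hb : DifferentiableAt ℝ b p)
    (hX : DifferentiableAt ℝ X p) (hY : DifferentiableAt ℝ Y p) :
    pds (fun q => a q • X q + b q • Y q) p =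
      (a p • pds X p + pds a p • X p) + (b p • pds Y p + pds b p • Y p) :=
  (((hasDerivAt_pds ha).smul (hasDerivAt_pds hX)).add
    ((hasDerivAt_pds hb).smul (hasDerivAt_pds hY))).deriv

lemma pdt_smul_add_smul (ha : DifferentiableAt ℝ a p) (hb : DifferentiableAt ℝ b p)
    (hX : DifferentiableAt ℝ X p) (hY : DifferentiableAt ℝ Y p) :
    pdt (fun q => a q • X q + b q • Y q) p =
      (a p • pdt X p + pdt a p • X p) + (b p • pdt Y p + pdt b p • Y p) :=
  (((hasDerivAt_pdt ha).smul (hasDerivAt_pdt hX)).add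
    ((hasDerivAt_pdt hb).smul (hasDerivAt_pdt hY))).deriv

end PartialDerivatives

lemma lor_comm (x y : V3) : lor x y = lor y x := by
  unfold lor
  ring

/-- The Lorentzian inner product `lor` as a bilinear form, which gives access to Mathlib's theory of
orthogonal families. -/
def lorForm : LinearMap.BilinForm ℝ V3 :=
  LinearMap.mk₂ ℝ lor
    (fun x x' y => by simp only [lor, Pi.add_apply]; ring)
    (fun c x y => by simp only [lor, Pi.smul_apply, smul_eq_mul]; ring)
    (fun x y y' => by simp only [lor, Pi.add_apply]; ring)
    (fun c x y => by simp only [lor, Pi.smul_apply, smul_eq_mul]; ring)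

lemma linearIndependent_pair_of_lor_eq_zero {x y : V3} (hx : lor x x ≠ 0) (hy : lor y y ≠ 0)
    (hxy : lor x y = 0) : LinearIndependent ℝ ![x, y] := by
  have hyx : lor y x = 0 := lor_comm x y ▸ hxy
  apply LinearMap.linearIndependent_of_isOrthoᵢ (B := lorForm)
  · rw [LinearMap.isOrthoᵢ_def]
    intro i j hij
    fin_cases i <;> fin_cases j <;> first | exact absurd rfl hij | assumption
  · intro i
    fin_cases i <;> assumption

section FrameEvolution

variable {F : Type*} [NormedAddCommGroup F] [NormedSpace ℝ F]
  {T E₁ E₂ : ℝ × ℝ → F} {k₁ k₂ : ℝ × ℝ → ℝ}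

lemma pdt_curvatures_eq_of_frame_equations {a b : ℝ × ℝ → ℝ} {u : ℝ} {p : ℝ × ℝ}
    (hT : ContDiff ℝ 2 T)
    (hE₁ : DifferentiableAt ℝ E₁ p) (hE₂ : DifferentiableAt ℝ E₂ p)
    (hk₁ : DifferentiableAt ℝ k₁ p) (hk₂ : DifferentiableAt ℝ k₂ p)
    (ha : DifferentiableAt ℝ a p) (hb : DifferentiableAt ℝ b p)
    (hindep : LinearIndependent ℝ ![E₁ p, E₂ p])
    (hTs : ∀ q, pds T q = k₁ q • E₁ q + k₂ q • E₂ q)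
    (hE₁s : pds E₁ p = -(k₁ p) • T p)
    (hE₂s : pds E₂ p = k₂ p • T p)
    (hTt : ∀ q, pdt T q = a q • E₁ q + b q • E₂ q)
    (hE₁t : pdt E₁ p = -(a p) • T p - u • E₂ p)
    (hE₂t : pdt E₂ p = b p • T p - u • E₁ p) :
    pdt k₁ p = pds a p + u * k₂ p ∧ pdt k₂ p = pds b p + u * k₁ p := by
  have hmixed : pdt (fun q => k₁ q • E₁ q + k₂ q • E₂ q) p =
      pds (fun q => a q • E₁ q + b q • E₂ q) p := by
    simpa only [← funext hTs, ← funext hTt] using pdt_pds_comm hT p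
  rw [pdt_smul_add_smul hk₁ hk₂ hE₁ hE₂, pds_smul_add_smul ha hb hE₁ hE₂,
    hE₁s, hE₂s, hE₁t, hE₂t] at hmixed
  have hcoeff : pdt k₁ p • E₁ p + pdt k₂ p • E₂ p =
      (pds a p + u * k₂ p) • E₁ p + (pds b p + u * k₁ p) • E₂ p := by
    linear_combination (norm := module) hmixed
  exact hindep.eq_of_pair hcoeff

theorem statement18_general
    (hT : ContDiff ℝ 2 T) (hE₁ : Differentiable ℝ E₁) (hE₂ : Differentiable ℝ E₂)
    (hk₁ : ContDiff ℝ 2 k₁) (hk₂ : ContDiff ℝ 2 k₂)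
    (hindep : ∀ p, LinearIndependent ℝ ![E₁ p, E₂ p])
    (hTs : ∀ p, pds T p = k₁ p • E₁ p + k₂ p • E₂ p)
    (hE₁s : ∀ p, pds E₁ p = -(k₁ p) • T p)
    (hE₂s : ∀ p, pds E₂ p = k₂ p • T p)
    (hTt : ∀ p, pdt T p = pds k₂ p • E₁ p + pds k₁ p • E₂ p)
    (hE₁t : ∀ p, pdt E₁ p = -(pds k₂ p) • T p - ((k₁ p ^ 2 - k₂ p ^ 2) / 2) • E₂ p)
    (hE₂t : ∀ p, pdt E₂ p = pds k₁ p • T p - ((k₁ p ^ 2 - k₂ p ^ 2) / 2) • E₁ p) :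
    (∀ p, pdt k₁ p = pds (pds k₂) p + (k₁ p ^ 2 - k₂ p ^ 2) / 2 * k₂ p) ∧
    (∀ p, pdt k₂ p = pds (pds k₁) p + (k₁ p ^ 2 - k₂ p ^ 2) / 2 * k₁ p) :=
  forall_and.mp fun p =>
    pdt_curvatures_eq_of_frame_equations hT (hE₁ p) (hE₂ p)
      (hk₁.differentiable two_ne_zero p) (hk₂.differentiable two_ne_zero p)
      (differentiable_pds hk₂ p) (differentiable_pds hk₁ p)
      (hindep p) hTs (hE₁s p) (hE₂s p) hTt (hE₁t p) (hE₂t p)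

end FrameEvolution

/-- For a parallel frame `(T,E₁,E₂)` of signature `(+,+,−)` with
the stated `s`- and `t`-evolution equations (with `u = −½(k₁² − k₂²)`), the principal
curvatures evolve by `(k₁)_t = (k₂)ₛₛ + ½(k₁² − k₂²)k₂` and
`(k₂)_t = (k₁)ₛₛ + ½(k₁² − k₂²)k₁`. -/
theorem statement18 (T E₁ E₂ : ℝ × ℝ → V3) (k₁ k₂ : ℝ × ℝ → ℝ)
    (hT : ContDiff ℝ (⊤ : ℕ∞) T) (hE₁ : ContDiff ℝ (⊤ : ℕ∞) E₁) (hE₂ : ContDiff ℝ (⊤ : ℕ∞) E₂)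
    (hk₁ : ContDiff ℝ (⊤ : ℕ∞) k₁) (hk₂ : ContDiff ℝ (⊤ : ℕ∞) k₂)
    (hTT : ∀ p, lor (T p) (T p) = 1)
    (hE₁E₁ : ∀ p, lor (E₁ p) (E₁ p) = 1)
    (hE₂E₂ : ∀ p, lor (E₂ p) (E₂ p) = -1)
    (hTE₁ : ∀ p, lor (T p) (E₁ p) = 0)
    (hTE₂ : ∀ p, lor (T p) (E₂ p) = 0)
    (hE₁E₂ : ∀ p, lor (E₁ p) (E₂ p) = 0)
    (hTs : ∀ p, pds T p = k₁ p • E₁ p + k₂ p • E₂ p)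
    (hE₁s : ∀ p, pds E₁ p = -(k₁ p) • T p)
    (hE₂s : ∀ p, pds E₂ p = k₂ p • T p)
    (hTt : ∀ p, pdt T p = (pds k₂ p) • E₁ p + (pds k₁ p) • E₂ p)
    (hE₁t : ∀ p, pdt E₁ p = -(pds k₂ p) • T p - ((k₁ p ^ 2 - k₂ p ^ 2) / 2) • E₂ p)
    (hE₂t : ∀ p, pdt E₂ p = (pds k₁ p) • T p - ((k₁ p ^ 2 - k₂ p ^ 2) / 2) • E₁ p) :
    (∀ p, pdt k₁ p = pds (pds k₂) p + (k₁ p ^ 2 - k₂ p ^ 2) / 2 * k₂ p) ∧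
    (∀ p, pdt k₂ p = pds (pds k₁) p + (k₁ p ^ 2 - k₂ p ^ 2) / 2 * k₁ p) := by
  have hindep (p : ℝ × ℝ) : LinearIndependent ℝ ![E₁ p, E₂ p] :=
    linearIndependent_pair_of_lor_eq_zero (by simp [hE₁E₁]) (by simp [hE₂E₂]) (hE₁E₂ p)
  have htwo : (2 : WithTop ℕ∞) ≤ (⊤ : ℕ∞) := ENat.LEInfty.out
  exact statement18_general (hT.of_le htwo) (hE₁.differentiable (by simp))
    (hE₂.differentiable (by simp)) (hk₁.of_le htwo) (hk₂.of_le htwo) hindep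
    hTs hE₁s hE₂s hTt hE₁t hE₂t
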